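/- arXiv:2004.03746 — 2 statements merged into one kernel-verified Lean document; each statement's English description precedes it below -/
import Mathlib

section
/- The R-linear map ι : A → A ⊗_R A defined by ι(a) = a ⊗ x − (a·x) ⊗ 1 is injective and its image is exactly ker(m); hence ι is an R-module isomorphism from A onto ker(m). (This is the algebraic content of the paper's isomorphism isom₁ between the surviving subcomplex for the left-twisted first Reidemeister move and the complex of the simplified diagram.) -/
open Polynomial TensorProduct

/-- Khovanov's parametrized Frobenius algebra `A = R[X]/(X² − sX − t)`. -/
noncomputable abbrev KhovanovA (R : Type*) [CommRing R] (s t : R) : Type _ :=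
  AdjoinRoot (X ^ 2 - C s * X - C t)

/-- The generator `x` (the image of `X`) of Khovanov's parametrized Frobenius algebra. -/
noncomputable abbrev KhovanovX (R : Type*) [CommRing R] (s t : R) : KhovanovA R s t :=
  AdjoinRoot.root (X ^ 2 - C s * X - C t)

theorem khovanov_monic {R : Type*} [CommRing R] (s t : R) :
    (X ^ 2 - C s * X - C t : R[X]).Monic := by
  monicity!

theorem khovanov_natDegree {R : Type*} [CommRing R] [Nontrivial R] (s t : R) :
    (X ^ 2 - C s * X - C t : R[X]).natDegree = 2 := by
  compute_degree!

/-- The generator `x` and `1` span `A` over `R`. -/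
theorem khovanov_exists_eq_add_smul {R : Type*} [CommRing R] (s t : R) (a : KhovanovA R s t) :
    ∃ c d : R, a = c • (1 : KhovanovA R s t) + d • KhovanovX R s t := by
  cases subsingleton_or_nontrivial R
  · have := Module.subsingleton R (KhovanovA R s t)
    exact ⟨0, 0, Subsingleton.elim _ _⟩
  obtain ⟨p, rfl⟩ := AdjoinRoot.mk_surjective a
  have hm := khovanov_monic s t
  have hlt := natDegree_modByMonic_lt p hm
    (fun h => by simpa [h] using khovanov_natDegree s t)
  rw [khovanov_natDegree] at hlt
  obtain ⟨d, c, h⟩ := exists_eq_X_add_C_of_natDegree_le_one (Nat.le_of_lt_succ hlt)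
  refine ⟨c, d, ?_⟩
  rw [← AdjoinRoot.mk_leftInverse hm (AdjoinRoot.mk _ p), AdjoinRoot.modByMonicHom_mk, h]
  simp [Algebra.smul_def, AdjoinRoot.algebraMap_eq, add_comm]

/-- There is a linear functional reading off the coefficient of `x`. -/
theorem khovanov_exists_coeff {R : Type*} [CommRing R] (s t : R) :
    ∃ φ : KhovanovA R s t →ₗ[R] R, φ 1 = 0 ∧ φ (KhovanovX R s t) = 1 := by
  have hm := khovanov_monic s t
  refine ⟨lcoeff R 1 ∘ₗ AdjoinRoot.modByMonicHom hm, ?_, ?_⟩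
  · nontriviality R
    have hdeg : degree (1 : R[X]) < degree (X ^ 2 - C s * X - C t) :=
      degree_lt_degree (by rw [khovanov_natDegree]; simp)
    rw [← map_one (AdjoinRoot.mk _), LinearMap.comp_apply, AdjoinRoot.modByMonicHom_mk,
      (modByMonic_eq_self_iff hm).2 hdeg]
    simp [coeff_one]
  · nontriviality R
    have hdeg : degree (X : R[X]) < degree (X ^ 2 - C s * X - C t) :=
      degree_lt_degree (by rw [khovanov_natDegree]; simp)
    rw [KhovanovX, ← AdjoinRoot.mk_X, LinearMap.comp_apply, AdjoinRoot.modByMonicHom_mk,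
      (modByMonic_eq_self_iff hm).2 hdeg]
    simp

/-- `A ⊗ A` is spanned by `1 ⊗ 1` and `1 ⊗ x` as a left `A`-module. -/
theorem khovanov_tensor_exists_eq_add {R : Type*} [CommRing R] (s t : R)
    (z : KhovanovA R s t ⊗[R] KhovanovA R s t) :
    ∃ a b : KhovanovA R s t,
      z = a ⊗ₜ[R] (1 : KhovanovA R s t) + b ⊗ₜ[R] KhovanovX R s t := by
  induction z using TensorProduct.induction_on with
  | zero => exact ⟨0, 0, by simp⟩
  | tmul a b =>
    obtain ⟨c, d, rfl⟩ := khovanov_exists_eq_add_smul s t b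
    exact ⟨c • a, d • a, by simp only [tmul_add, tmul_smul, smul_tmul']⟩
  | add z w hz hw =>
    obtain ⟨a, b, rfl⟩ := hz
    obtain ⟨a', b', rfl⟩ := hw
    exact ⟨a + a', b + b', by simp only [add_tmul]; abel⟩

/-- The map `ι(a) = a ⊗ x − (a·x) ⊗ 1` is injective with image exactly `ker m`;
hence it is an isomorphism from `A` onto `ker m`. -/
theorem khovanov_iota_iso_ker (R : Type*) [CommRing R] (s t : R)
    (ι : KhovanovA R s t →ₗ[R] KhovanovA R s t ⊗[R] KhovanovA R s t)
    (hι : ∀ a : KhovanovA R s t,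
      ι a = a ⊗ₜ[R] KhovanovX R s t - (a * KhovanovX R s t) ⊗ₜ[R] (1 : KhovanovA R s t)) :
    Function.Injective ι
    ∧ LinearMap.range ι = LinearMap.ker (LinearMap.mul' R (KhovanovA R s t)) := by
  constructor
  · obtain ⟨φ, h1, hx⟩ := khovanov_exists_coeff s t
    refine Function.LeftInverse.injective
      (g := TensorProduct.rid R (KhovanovA R s t) ∘ φ.lTensor (KhovanovA R s t)) fun a => ?_
    simp [hι, h1, hx]
  · apply le_antisymm
    · rintro _ ⟨a, rfl⟩
      simp [hι]
    · intro z hz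
      obtain ⟨a, b, rfl⟩ := khovanov_tensor_exists_eq_add s t z
      have hab : a + b * KhovanovX R s t = 0 := by simpa using hz
      refine ⟨b, ?_⟩
      rw [hι, eq_neg_of_add_eq_zero_left hab, neg_tmul]
      abel
end

section
/- Define R-linear maps h : A → A ⊗_R A by h(a) = a ⊗ 1, r : A ⊗_R A → A by r = id_A ⊗ ε (so r(a ⊗ 1) = 0 and r(a ⊗ x) = a), ι : A → A ⊗_R A by ι(a) = a ⊗ x − (a·x) ⊗ 1, and ρ = ι ∘ r : A ⊗_R A → A ⊗_R A. Then h ∘ m = id_{A⊗A} − ρ and m ∘ h = id_A. (This is the algebraic content of the paper's Proposition for the left-twisted first Reidemeister move: h is the explicit chain homotopy h₁ satisfying δ∘h₁ + h₁∘δ = id − in∘ρ₁ for the local two-term Khovanov complex.) -/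
open Polynomial TensorProduct

/-- The relation `x² = s x + t` in Khovanov's parametrized Frobenius algebra. -/
theorem KhovanovX_mul_self (R : Type*) [CommRing R] (s t : R) :
    KhovanovX R s t * KhovanovX R s t = s • KhovanovX R s t + t • (1 : KhovanovA R s t) := by
  have hroot := AdjoinRoot.eval₂_root (X ^ 2 - C s * X - C t)
  simp only [eval₂_sub, eval₂_mul, eval₂_pow, eval₂_X, eval₂_C] at hroot
  rw [Algebra.smul_def, Algebra.smul_def, AdjoinRoot.algebraMap_eq]
  linear_combination hroot

/-- The elements `1` and `x` span Khovanov's parametrized Frobenius algebra. -/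
theorem KhovanovA.exists_eq_smul_one_add_smul_X (R : Type*) [CommRing R] (s t : R)
    (a : KhovanovA R s t) :
    ∃ c d : R, a = c • (1 : KhovanovA R s t) + d • KhovanovX R s t := by
  obtain ⟨p, rfl⟩ := AdjoinRoot.mk_surjective a
  induction p using Polynomial.induction_on with
  | C c => exact ⟨c, 0, by simp [Algebra.smul_def]⟩
  | add p q hp hq =>
    obtain ⟨c, d, hp⟩ := hp
    obtain ⟨c', d', hq⟩ := hq
    exact ⟨c + c', d + d', by rw [map_add, hp, hq]; module⟩
  | monomial n b hb =>
    obtain ⟨c, d, hb⟩ := hb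
    refine ⟨d * t, c + d * s, ?_⟩
    rw [pow_succ X n, ← mul_assoc, map_mul, hb, AdjoinRoot.mk_X, add_mul, smul_mul_assoc,
      smul_mul_assoc, one_mul, KhovanovX_mul_self]
    module

/-- The explicit chain homotopy for the left-twisted first Reidemeister move: with
`h(a) = a ⊗ 1`, `r = id ⊗ ε`, `ι(a) = a ⊗ x − (a·x) ⊗ 1`, and `ρ = ι ∘ r`, one has
`h ∘ m = id − ρ` and `m ∘ h = id`. -/
theorem khovanov_R1_homotopy (R : Type*) [CommRing R] (s t : R)
    (ε : KhovanovA R s t →ₗ[R] R)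
    (hε1 : ε 1 = 0) (hεx : ε (KhovanovX R s t) = 1)
    (h : KhovanovA R s t →ₗ[R] KhovanovA R s t ⊗[R] KhovanovA R s t)
    (hh : ∀ a : KhovanovA R s t, h a = a ⊗ₜ[R] (1 : KhovanovA R s t))
    (r : KhovanovA R s t ⊗[R] KhovanovA R s t →ₗ[R] KhovanovA R s t)
    (hr : ∀ a b : KhovanovA R s t, r (a ⊗ₜ[R] b) = ε b • a)
    (ι : KhovanovA R s t →ₗ[R] KhovanovA R s t ⊗[R] KhovanovA R s t)
    (hι : ∀ a : KhovanovA R s t,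
      ι a = a ⊗ₜ[R] KhovanovX R s t - (a * KhovanovX R s t) ⊗ₜ[R] (1 : KhovanovA R s t))
    (ρ : KhovanovA R s t ⊗[R] KhovanovA R s t →ₗ[R] KhovanovA R s t ⊗[R] KhovanovA R s t)
    (hρ : ρ = ι ∘ₗ r) :
    h ∘ₗ LinearMap.mul' R (KhovanovA R s t) = LinearMap.id - ρ
    ∧ LinearMap.mul' R (KhovanovA R s t) ∘ₗ h = LinearMap.id := by
  refine ⟨TensorProduct.ext' fun a b => ?_, LinearMap.ext fun a => by simp [hh]⟩
  obtain ⟨c, d, rfl⟩ := KhovanovA.exists_eq_smul_one_add_smul_X R s t b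
  have hε : ε (c • 1 + d • KhovanovX R s t) = d := by simp [hε1, hεx]
  rw [hρ, LinearMap.sub_apply, LinearMap.comp_apply, LinearMap.comp_apply, hr, hε, map_smul, hι,
    LinearMap.mul'_apply, hh, LinearMap.id_apply, mul_add, mul_smul_comm, mul_smul_comm, mul_one,
    add_tmul, tmul_add, tmul_smul, tmul_smul, ← smul_tmul', ← smul_tmul']
  module
end
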